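/- If G has coclass r ≥ 3 (so e = r+1 ≥ 4, order 3^n ≥ 3⁷, 5 ≤ m < n−1) and defect k = 0, then the commutator subgroup G' of G is isomorphic to the direct sum G' ≅ ℤ[X,Y]/𝔄(G) ≅ A(3, m−2) ⊕ A(3, e−2) of two nearly homocyclic abelian 3-groups of orders 3^{m−2} and 3^{e−2}; in particular G' is non-elementary of 3-rank exactly four. -/

import Mathlib

/-!
Write `G'` additively, with `s = [y,x]`, `σ_j`, `τ_j` in it (`σ₃ = y³` and `τ₃ = x³` lie in `G'`
because of the last two relations). The relations make `G'` the span of `s, σ₃, τ₃, τ₄`: this span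
is stable under commutation with `x` and `y`, hence normal, and `G` becomes abelian modulo it
(`commutator_le_closure`). Combining three of the relations gives `3 s = σ₄ - τ₄`, while
`3 σ_j + 3 σ_{j+1} + σ_{j+2} = 0` shows that `3` moves two steps along each chain up to terms
further down (`chain_exponent`). So the orders of `s, σ₃, τ₃, τ₄` divide
`3^⌈(m-2)/2⌉, 3^⌊(m-2)/2⌋, 3^⌈(e-2)/2⌉, 3^⌊(e-2)/2⌋`; for `s` this uses `e < m`. The product of these
bounds is `3^(m+e-4) = 3^(n-2) = |G'|`, so the resulting surjection
`A(3,m-2) ⊕ A(3,e-2) → G'` is an isomorphism (`structure_of_chains`).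

The map `Ψ` takes values in `G'` and reaches all of it, since `s_j`, `t_j` are values at `X^(j-2)`,
`Y^(j-2)` and the generators above are words in the `s_j`, `t_j`. Its kernel is `𝔄(G)`, whence the
statement on the quotient of the polynomial ring. The rank is read off by counting `3`-torsion, and
`G'` is not elementary because its order exceeds `81`.
-/

open MvPolynomial

/-- The paper's commutator `[a,b] = a⁻¹ b⁻¹ a b`. -/
def pcomm {G : Type*} [Group G] (a b : G) : G := a⁻¹ * b⁻¹ * a * b

/-- The iterated commutator `s₂^{(x-1)^i (y-1)^j}`, where `s₂ = [y,x]`,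
obtained by commutating `i` times with `x` and `j` times with `y`. -/
def wIter {G : Type*} [Group G] (x y : G) (i j : ℕ) : G :=
  (fun t => pcomm t x)^[i] ((fun t => pcomm t y)^[j] (pcomm y x))

/-- The higher commutators `s₂ = [y,x]`, `s_j = [s_{j-1}, x]` for `j ≥ 3`. -/
def sSeq {G : Type*} [Group G] (x y : G) (j : ℕ) : G :=
  (fun t => pcomm t x)^[j - 2] (pcomm y x)

/-- The higher commutators `t₂ = [y,x]`, `t_j = [t_{j-1}, y]` for `j ≥ 3`. -/
def tSeq {G : Type*} [Group G] (x y : G) (j : ℕ) : G :=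
  (fun t => pcomm t y)^[j - 2] (pcomm y x)

/-- `σ₃ = y³`, `σ_j = [σ_{j-1}, x]` for `j ≥ 4`. -/
def sigSeq {G : Type*} [Group G] (x y : G) (j : ℕ) : G :=
  (fun t => pcomm t x)^[j - 3] (y ^ 3)

/-- `τ₃ = x³`, `τ_j = [τ_{j-1}, y]` for `j ≥ 4`. -/
def tauSeq {G : Type*} [Group G] (x y : G) (j : ℕ) : G :=
  (fun t => pcomm t y)^[j - 3] (x ^ 3)

/-- The nearly homocyclic abelian `p`-group `A(p,μ)` of order `p^μ`: writing
`μ = q(p-1) + r` with `0 ≤ r < p-1`, it has `r` cyclic factors of order `p^{q+1}` and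
`p-1-r` factors of order `p^q` (trivial factors `ZMod 1` being allowed). -/
abbrev NearlyHomocyclic (p μ : ℕ) : Type :=
  (i : Fin (p - 1)) → ZMod (p ^ ((μ + p - 2 - (i : ℕ)) / (p - 1)))

/-! ### Abelian groups spanned by two chains -/

/-- The relation `3 v_j + 3 v_{j+1} + v_{j+2} = 0` says that `3` acts, up to a unit, as the square
of the shift, so two more steps along the chain cost one factor `3` in the exponent. -/
lemma chain_exponent {M : Type*} [AddCommGroup M] (v : ℕ → M) (N : ℕ)
    (hrel : ∀ j, 3 • v j + 3 • v (j + 1) + v (j + 2) = 0) (hzero : ∀ j, N ≤ j → v j = 0) :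
    ∀ a j, N ≤ j + 2 * a → (3 ^ a) • v j = 0 := by
  intro a
  induction a with
  | zero => intro j hj; simpa using hzero j (by omega)
  | succ a ih =>
    -- downward induction on `j`, encoded by the distance `d` to `N`
    have key : ∀ d j, N ≤ j + d → N ≤ j + 2 * (a + 1) → (3 ^ (a + 1)) • v j = 0 := by
      intro d
      induction d with
      | zero => intro j hj _; rw [hzero j (by omega), smul_zero]
      | succ d ihd =>
        intro j hj hj'
        have h1 : (3 ^ a) • (3 • v j + 3 • v (j + 1) + v (j + 2)) = 0 := by
          rw [hrel, smul_zero]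
        rw [smul_add, smul_add, ih (j + 2) (by omega), smul_smul, smul_smul, ← pow_succ,
          ihd (j + 1) (by omega) (by omega)] at h1
        simpa using h1
    intro j hj
    exact key N j (by omega) hj

lemma chain_mem {M : Type*} [AddCommGroup M] (v : ℕ → M) (H : AddSubgroup M)
    (hrel : ∀ j, 3 • v j + 3 • v (j + 1) + v (j + 2) = 0) (h0 : v 0 ∈ H) (h1 : v 1 ∈ H) :
    ∀ j, v j ∈ H := by
  suffices h : ∀ j, v j ∈ H ∧ v (j + 1) ∈ H from fun j => (h j).1
  intro j
  induction j with
  | zero => exact ⟨h0, h1⟩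
  | succ j ih =>
    refine ⟨ih.2, ?_⟩
    have h := eq_neg_of_add_eq_zero_right (hrel j)
    rw [h]
    exact H.neg_mem (H.add_mem (H.nsmul_mem ih.1 3) (H.nsmul_mem ih.2 3))

/-- Two elements of orders dividing those of the cyclic factors of `A(3,μ)` are the images of the
standard generators under a homomorphism. -/
lemma exists_hom_nearlyHomocyclic {M : Type*} [AddCommGroup M] (μ : ℕ) (g₀ g₁ : M)
    (h₀ : (3 ^ ((μ + 1) / 2)) • g₀ = 0) (h₁ : (3 ^ (μ / 2)) • g₁ = 0) :
    ∃ φ : NearlyHomocyclic 3 μ →+ M, g₀ ∈ φ.range ∧ g₁ ∈ φ.range := by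
  have hex : ∀ (N : ℕ) (g : M), N • g = 0 → ∃ f : ZMod N →+ M, f 1 = g := by
    intro N g hg
    refine ⟨ZMod.lift N ⟨zmultiplesHom M g, by simpa using hg⟩, ?_⟩
    have := ZMod.lift_coe N ⟨zmultiplesHom M g, by simpa using hg⟩ 1
    simpa using this
  obtain ⟨f₀, hf₀⟩ := hex (3 ^ ((μ + 3 - 2 - ((0 : Fin (3 - 1)) : ℕ)) / (3 - 1))) g₀
    (by simpa using h₀)
  obtain ⟨f₁, hf₁⟩ := hex (3 ^ ((μ + 3 - 2 - ((1 : Fin (3 - 1)) : ℕ)) / (3 - 1))) g₁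
    (by simpa using h₁)
  let π (i : Fin (3 - 1)) : NearlyHomocyclic 3 μ →+ _ :=
    Pi.evalAddMonoidHom (fun i : Fin (3 - 1) => ZMod (3 ^ ((μ + 3 - 2 - (i : ℕ)) / (3 - 1)))) i
  refine ⟨f₀.comp (π 0) + f₁.comp (π 1), ⟨Pi.single 0 1, ?_⟩, ⟨Pi.single 1 1, ?_⟩⟩
  · simp [π, hf₀]
  · simp [π, hf₁]

lemma card_nearlyHomocyclic (μ : ℕ) : Nat.card (NearlyHomocyclic 3 μ) = 3 ^ μ := by
  rw [Nat.card_pi]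
  simp only [Nat.card_zmod]
  rw [Finset.prod_pow_eq_pow_sum]
  congr 1
  have : ∀ f : Fin (3 - 1) → ℕ, ∑ i, f i = f 0 + f 1 := fun f => Fin.sum_univ_two f
  rw [this]
  simp
  omega

/-- Structure of an abelian group spanned by two chains `σ`, `τ`, indexed from `0`, and an element
`s` with `3 s = σ₁ - τ₁`: when it has the largest possible order `3^(m+e-4)`, it is
`⟨s, σ₀⟩ ⊕ ⟨τ₀, τ₁⟩`, because the product of the orders of these four generators is at most the
order of the group. -/
lemma structure_of_chains {M : Type*} [AddCommGroup M] (m e : ℕ)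
    (hm : 5 ≤ m) (he : 4 ≤ e) (hem : e + 1 ≤ m) (s : M) (σ τ : ℕ → M)
    (hσ : ∀ j, 3 • σ j + 3 • σ (j + 1) + σ (j + 2) = 0) (hσ0 : ∀ j, m - 3 ≤ j → σ j = 0)
    (hτ : ∀ j, 3 • τ j + 3 • τ (j + 1) + τ (j + 2) = 0) (hτ0 : ∀ j, e - 2 ≤ j → τ j = 0)
    (hs : 3 • s = σ 1 - τ 1)
    (hgen : AddSubgroup.closure ({s, σ 0, τ 0, τ 1} : Set M) = ⊤)
    (hcard : Nat.card M = 3 ^ (m + e - 4)) :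
    Nonempty (M ≃+ NearlyHomocyclic 3 (m - 2) × NearlyHomocyclic 3 (e - 2)) := by
  have eσ := chain_exponent σ _ hσ hσ0
  have eτ := chain_exponent τ _ hτ hτ0
  have es : (3 ^ ((m - 2 + 1) / 2)) • s = 0 := by
    obtain ⟨a, ha⟩ : ∃ a, (m - 2 + 1) / 2 = a + 1 := ⟨(m - 2 + 1) / 2 - 1, by omega⟩
    rw [ha, pow_succ, mul_smul, hs, smul_sub, eσ a 1 (by omega), eτ a 1 (by omega), sub_zero]
  obtain ⟨φ, hφ0, hφ1⟩ := exists_hom_nearlyHomocyclic (m - 2) s (σ 0) es (eσ _ 0 (by omega))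
  obtain ⟨ψ, hψ0, hψ1⟩ := exists_hom_nearlyHomocyclic (e - 2) (τ 0) (τ 1)
    (eτ _ 0 (by omega)) (eτ _ 1 (by omega))
  have hsurj : Function.Surjective (φ.coprod ψ) := by
    rw [← AddMonoidHom.range_eq_top, eq_top_iff, ← hgen, AddSubgroup.closure_le]
    have inl : φ.range ≤ (φ.coprod ψ).range := by
      rintro _ ⟨a, rfl⟩; exact ⟨(a, 0), by simp⟩
    have inr : ψ.range ≤ (φ.coprod ψ).range := by
      rintro _ ⟨a, rfl⟩; exact ⟨(0, a), by simp⟩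
    rintro g (rfl | rfl | rfl | rfl)
    exacts [inl hφ0, inl hφ1, inr hψ0, inr hψ1]
  have hfin : Finite (NearlyHomocyclic 3 (m - 2) × NearlyHomocyclic 3 (e - 2)) := by
    apply Nat.finite_of_card_ne_zero
    rw [Nat.card_prod, card_nearlyHomocyclic, card_nearlyHomocyclic]
    positivity
  have hbij := hsurj.bijective_of_nat_card_le (by
    rw [hcard, Nat.card_prod, card_nearlyHomocyclic, card_nearlyHomocyclic, ← pow_add]
    apply le_of_eq; congr 1; omega)
  exact ⟨(AddEquiv.ofBijective _ hbij).symm⟩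

/-- For `μ ≥ 2` both cyclic factors of `A(3,μ)` are nontrivial, so its `3`-torsion has order `9`. -/
lemma card_three_torsion (μ : ℕ) (hμ : 2 ≤ μ) :
    Nat.card {g : NearlyHomocyclic 3 μ // 3 • g = 0} = 9 := by
  have hz : ∀ a, 1 ≤ a → Nat.card {z : ZMod (3 ^ a) // 3 • z = 0} = 3 := by
    intro a ha
    have h := IsAddCyclic.card_nsmulAddMonoidHom_ker (G := ZMod (3 ^ a)) 3
    rw [Nat.card_zmod, Nat.gcd_eq_right (dvd_pow_self 3 (by omega))] at h
    exact h
  let E : {g : NearlyHomocyclic 3 μ // 3 • g = 0} ≃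
      ((i : Fin (3 - 1)) → {z : ZMod (3 ^ ((μ + 3 - 2 - (i : ℕ)) / (3 - 1))) // 3 • z = 0}) :=
    { toFun := fun g i => ⟨g.1 i, congrFun g.2 i⟩
      invFun := fun f => ⟨fun i => (f i).1, funext fun i => (f i).2⟩
      left_inv := fun _ => rfl
      right_inv := fun _ => rfl }
  rw [Nat.card_congr E, Nat.card_pi, Finset.prod_congr rfl (fun i _ => hz _ ?_)]
  · simp
  · have := i.2
    omega

/-! ### The commutator subgroup of a two-generator group -/

/-- A subgroup generated by elements whose commutators with the two generators of `G` stay inside,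
and containing the main commutator `[y,x]`, contains the commutator subgroup. -/
lemma commutator_le_closure {G : Type*} [Group G] [Finite G] (x y : G) (S : Set G)
    (hgen : Subgroup.closure ({x, y} : Set G) = ⊤)
    (hyx : pcomm y x ∈ Subgroup.closure S)
    (hx : ∀ g ∈ S, pcomm g x ∈ Subgroup.closure S)
    (hy : ∀ g ∈ S, pcomm g y ∈ Subgroup.closure S) :
    commutator G ≤ Subgroup.closure S := by
  set H := Subgroup.closure S with hH
  have conj_gen : ∀ z, (∀ g ∈ S, pcomm g z ∈ H) → ∀ h ∈ H, z⁻¹ * h * z ∈ H := by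
    intro z hz h hh
    induction hh using Subgroup.closure_induction with
    | mem g hg =>
      have := H.mul_mem (Subgroup.subset_closure hg) (hz g hg)
      simpa [pcomm, mul_assoc] using this
    | one => simp
    | mul a b _ _ iha ihb =>
      have := H.mul_mem iha ihb
      simpa [mul_assoc] using this
    | inv a _ iha =>
      have := H.inv_mem iha
      simpa [mul_assoc] using this
  have conj_all : ∀ z : G, ∀ h ∈ H, z⁻¹ * h * z ∈ H := by
    intro z
    have hz : z ∈ Subgroup.closure ({x, y} : Set G) := hgen ▸ Subgroup.mem_top z
    induction hz using Subgroup.closure_induction with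
    | mem g hg =>
      rcases hg with rfl | rfl
      exacts [conj_gen _ hx, conj_gen _ hy]
    | one => intro h hh; simpa using hh
    | mul a b _ _ iha ihb =>
      intro h hh
      simpa [mul_assoc] using ihb _ (iha _ hh)
    | inv a _ iha =>
      -- in a finite group `a⁻¹` is a power of `a`
      have hpow : ∀ k : ℕ, ∀ h ∈ H, (a ^ k)⁻¹ * h * a ^ k ∈ H := by
        intro k
        induction k with
        | zero => intro h hh; simpa using hh
        | succ k ih => intro h hh; simpa [pow_succ, mul_assoc] using iha _ (ih _ hh)
      have ha : a⁻¹ = a ^ (orderOf a - 1) := by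
        rw [inv_eq_iff_mul_eq_one, ← pow_succ', Nat.sub_add_cancel (orderOf_pos a),
          pow_orderOf_eq_one]
      rw [ha]
      exact hpow _
  have hN : H.Normal := ⟨fun h hh g => by simpa using conj_all g⁻¹ h hh⟩
  have hxy : Commute (x : G ⧸ H) (y : G ⧸ H) := by
    have h : ((x * y : G) : G ⧸ H) = ((y * x : G) : G ⧸ H) := by
      rw [eq_comm, QuotientGroup.eq, ← H.inv_mem_iff]
      simpa [pcomm, mul_assoc] using hyx
    simpa [Commute, SemiconjBy] using h
  have hcomm : ∀ a b : G, Commute (a : G ⧸ H) (b : G ⧸ H) := by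
    intro a b
    have ha : a ∈ Subgroup.closure ({x, y} : Set G) := hgen ▸ Subgroup.mem_top a
    have hb : b ∈ Subgroup.closure ({x, y} : Set G) := hgen ▸ Subgroup.mem_top b
    induction ha, hb using Subgroup.closure_induction₂ with
    | mem a b ha hb =>
      rcases ha with rfl | rfl <;> rcases hb with rfl | rfl
      exacts [Commute.refl _, hxy, hxy.symm, Commute.refl _]
    | one_left => simp
    | one_right => simp
    | mul_left _ _ _ _ _ _ h₁ h₂ => simpa using h₁.mul_left h₂
    | mul_right _ _ _ _ _ _ h₁ h₂ => simpa using h₁.mul_right h₂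
    | inv_left _ _ _ _ h => simpa using h.inv_left
    | inv_right _ _ _ _ h => simpa using h.inv_right
  rw [commutator_def, Subgroup.commutator_le]
  intro a _ b _
  rw [← QuotientGroup.eq_one_iff]
  have := (hcomm a b).commutator_eq
  simpa [commutatorElement_def] using this

lemma pcomm_mem_commutator {G : Type*} [Group G] (a b : G) : pcomm a b ∈ commutator G := by
  have h := Subgroup.commutator_mem_commutator (Subgroup.mem_top a⁻¹) (Subgroup.mem_top b⁻¹)
  simpa [commutator_def, pcomm, commutatorElement_def] using h

lemma iterate_pcomm_mem {G : Type*} [Group G] (x u : G) (hu : u ∈ commutator G) (k : ℕ) :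
    (fun t => pcomm t x)^[k] u ∈ commutator G := by
  cases k with
  | zero => exact hu
  | succ k => rw [Function.iterate_succ_apply']; exact pcomm_mem_commutator _ _

/-! ### The isomorphism type of the commutator subgroup -/

lemma equiv_of_ker_eq {P Q R : Type*} [AddCommGroup P] [AddCommGroup Q] [AddCommGroup R]
    (f : P →+ Q) (g : P →+ R) (hf : Function.Surjective f) (hg : Function.Surjective g)
    (h : f.ker = g.ker) : Nonempty (Q ≃+ R) :=
  ⟨(QuotientAddGroup.quotientKerEquivOfSurjective f hf).symm.trans
    ((QuotientAddGroup.quotientAddEquivOfEq h).trans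
      (QuotientAddGroup.quotientKerEquivOfSurjective g hg))⟩

theorem commutator_subgroup_coclass_ge_three_defect_zero
    {G : Type*} [Group G] [Finite G]
    (m n e k : ℕ) (x y : G) (α β γ δ ρ : ℤ)
    (hm : 4 ≤ m) (hmn : m < n) (hn2m : n ≤ 2 * m - 3) (he : e = n - m + 2) (he3 : 3 ≤ e)
    (hk : k ≤ 1) (hkrho : k = 0 ↔ ρ = 0)
    (hα : α = -1 ∨ α = 0 ∨ α = 1) (hβ : β = -1 ∨ β = 0 ∨ β = 1)
    (hγ : γ = -1 ∨ γ = 0 ∨ γ = 1) (hδ : δ = -1 ∨ δ = 0 ∨ δ = 1)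
    (hρ : ρ = -1 ∨ ρ = 0 ∨ ρ = 1)
    (hcard : Nat.card G = 3 ^ n)
    (hab : Nat.card (G ⧸ commutator G) = 9)
    (habel : ∀ a ∈ commutator G, ∀ b ∈ commutator G, a * b = b * a)
    (hgen : Subgroup.closure ({x, y} : Set G) = ⊤)
    (hR1s : ∀ i, 3 ≤ i → sSeq x y i ^ 3 * sSeq x y (i + 1) ^ 3 * sSeq x y (i + 2) = 1)
    (hR1t : ∀ i, 3 ≤ i → tSeq x y i ^ 3 * tSeq x y (i + 1) ^ 3 * tSeq x y (i + 2) = 1)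
    (hR2sig : ∀ j, 3 ≤ j → sigSeq x y j ^ 3 * sigSeq x y (j + 1) ^ 3 * sigSeq x y (j + 2) = 1)
    (hR2tau : ∀ j, 3 ≤ j → tauSeq x y j ^ 3 * tauSeq x y (j + 1) ^ 3 * tauSeq x y (j + 2) = 1)
    (hR3s : sSeq x y 2 ^ 3 * sSeq x y 3 ^ 3 * sSeq x y 4 = (tauSeq x y 4)⁻¹)
    (hR3t : tSeq x y 2 ^ 3 * tSeq x y 3 ^ 3 * tSeq x y 4 = sigSeq x y 4)
    (hR4sig : ∀ j, 3 ≤ j → pcomm (sigSeq x y j) y = 1)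
    (hR4tau : ∀ j, 3 ≤ j → pcomm (tauSeq x y j) x = 1)
    (hR5a : ∀ i, 3 ≤ i → i ≤ m - 1 → sigSeq x y i ≠ 1)
    (hR5b : ∀ i, m ≤ i → sigSeq x y i = 1)
    (hR6a : ∀ j, 3 ≤ j → j ≤ e + k → tauSeq x y j ≠ 1)
    (hR6b : ∀ j, e + k + 1 ≤ j → tauSeq x y j = 1)
    (hR7sig : ∀ i, 5 ≤ i → sigSeq x y i = sSeq x y (i - 2) ^ 3)
    (hR7tau : ∀ i, 5 ≤ i → tauSeq x y i = tSeq x y (i - 2) ^ (-3 : ℤ))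
    (hR8s : ∀ j, 5 ≤ j → sSeq x y j = (sigSeq x y j)⁻¹ * (sigSeq x y (j + 1))⁻¹)
    (hR8t : ∀ j, 5 ≤ j → tSeq x y j = tauSeq x y j * tauSeq x y (j + 1))
    (hR9s : pcomm (sSeq x y 3) y = sigSeq x y (m - 1) ^ (-(ρ * δ)))
    (hR9t : pcomm (tSeq x y 3) x = sigSeq x y (m - 1) ^ (-(ρ * δ)))
    (hR10 : sSeq x y 2 ^ 3 * (sSeq x y 3 * tSeq x y 3) ^ 3 * sSeq x y 4 * tSeq x y 4 =
      sigSeq x y (m - 1) ^ (ρ * β))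
    (hR11 : tauSeq x y (e + 1) = sigSeq x y (m - 1) ^ (-ρ))
    (hR12 : sSeq x y 4 * sigSeq x y 4 * sigSeq x y 5 = sigSeq x y (m - 1) ^ (ρ * β))
    (hR13 : sSeq x y 3 * sigSeq x y 3 * sigSeq x y 4 =
      sigSeq x y (m - 2) ^ (ρ * β) * sigSeq x y (m - 1) ^ γ * tauSeq x y e ^ δ)
    (hR14 : (tSeq x y 3)⁻¹ * tauSeq x y 3 * tauSeq x y 4 =
      sigSeq x y (m - 2) ^ (ρ * δ) * sigSeq x y (m - 1) ^ α * tauSeq x y e ^ β)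
    (hk0 : k = 0) (hrho0 : ρ = 0) (he4 : 4 ≤ e) (hm5 : 5 ≤ m) (hmn2 : m < n - 1)
    (Ψ : MvPolynomial (Fin 2) ℤ → G)
    (hΨadd : ∀ f g, Ψ (f + g) = Ψ f * Ψ g)
    (hΨmon : ∀ i j : ℕ, Ψ (X 0 ^ i * X 1 ^ j) = wIter x y i j)
    (A : Ideal (MvPolynomial (Fin 2) ℤ))
    (hA : ∀ f, f ∈ A ↔ Ψ f = 1)
    :
    Nonempty ((MvPolynomial (Fin 2) ℤ ⧸ A) ≃+
      (NearlyHomocyclic 3 (m - 2) × NearlyHomocyclic 3 (e - 2))) ∧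
    Nonempty (Additive ↥(commutator G) ≃+
      (NearlyHomocyclic 3 (m - 2) × NearlyHomocyclic 3 (e - 2))) ∧
    (∃ g ∈ commutator G, g ^ 3 ≠ 1) ∧
    Nat.card {g : G // g ∈ commutator G ∧ g ^ 3 = 1} = 81 := by
  subst hk0 hrho0
  obtain ⟨m, rfl⟩ : ∃ m', m = m' + 5 := ⟨m - 5, by omega⟩
  obtain ⟨e, rfl⟩ : ∃ e', e = e' + 4 := ⟨e - 4, by omega⟩
  simp only [zero_mul, neg_zero, zpow_zero, one_mul] at *
  have hsx : ∀ j, sSeq x y (j + 3) = pcomm (sSeq x y (j + 2)) x := fun j =>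
    Function.iterate_succ_apply' _ _ _
  have hty : ∀ j, tSeq x y (j + 3) = pcomm (tSeq x y (j + 2)) y := fun j =>
    Function.iterate_succ_apply' _ _ _
  have hσx : ∀ j, sigSeq x y (j + 4) = pcomm (sigSeq x y (j + 3)) x := fun j =>
    Function.iterate_succ_apply' _ _ _
  have hτy : ∀ j, tauSeq x y (j + 4) = pcomm (tauSeq x y (j + 3)) y := fun j =>
    Function.iterate_succ_apply' _ _ _
  have ms : ∀ j, sSeq x y j ∈ commutator G := fun j =>
    iterate_pcomm_mem x _ (pcomm_mem_commutator y x) _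
  have mt : ∀ j, tSeq x y j ∈ commutator G := fun j =>
    iterate_pcomm_mem y _ (pcomm_mem_commutator y x) _
  have mσ4 : ∀ j, sigSeq x y (j + 4) ∈ commutator G := fun j => by
    rw [hσx]; exact pcomm_mem_commutator _ _
  have mτ4 : ∀ j, tauSeq x y (j + 4) ∈ commutator G := fun j => by
    rw [hτy]; exact pcomm_mem_commutator _ _
  have mσ3 : sigSeq x y 3 ∈ commutator G := by
    have h : sSeq x y 3 * sigSeq x y 3 * sigSeq x y 4 ∈ commutator G := by
      rw [hR13]
      exact mul_mem (zpow_mem (mσ4 m) _) (zpow_mem (mτ4 e) _)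
    exact (Subgroup.mul_mem_cancel_left _ (ms 3)).1 ((Subgroup.mul_mem_cancel_right _ (mσ4 0)).1 h)
  have mτ3 : tauSeq x y 3 ∈ commutator G := by
    have h : (tSeq x y 3)⁻¹ * tauSeq x y 3 * tauSeq x y 4 ∈ commutator G := by
      rw [hR14]
      exact mul_mem (zpow_mem (mσ4 m) _) (zpow_mem (mτ4 e) _)
    exact (Subgroup.mul_mem_cancel_left _ (inv_mem (mt 3))).1
      ((Subgroup.mul_mem_cancel_right _ (mτ4 0)).1 h)
  have mσ : ∀ j, sigSeq x y (j + 3) ∈ commutator G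
    | 0 => mσ3
    | j + 1 => mσ4 j
  have mτ : ∀ j, tauSeq x y (j + 3) ∈ commutator G
    | 0 => mτ3
    | j + 1 => mτ4 j
  let _ : CommGroup (commutator G) :=
    { (inferInstance : Group (commutator G)) with
      mul_comm := fun a b => Subtype.ext (habel a a.2 b b.2) }
  -- indices are shifted to start at `0`: `s j = s_{j+2}`, `t j = t_{j+2}`, `σ j = σ_{j+3}`,
  -- `τ j = τ_{j+3}`
  let s : ℕ → Additive (commutator G) := fun j => Additive.ofMul ⟨sSeq x y (j + 2), ms _⟩
  let t : ℕ → Additive (commutator G) := fun j => Additive.ofMul ⟨tSeq x y (j + 2), mt _⟩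
  let σ : ℕ → Additive (commutator G) := fun j => Additive.ofMul ⟨sigSeq x y (j + 3), mσ _⟩
  let τ : ℕ → Additive (commutator G) := fun j => Additive.ofMul ⟨tauSeq x y (j + 3), mτ _⟩
  have hst : t 0 = s 0 := rfl
  have aσ : ∀ j, 3 • σ j + 3 • σ (j + 1) + σ (j + 2) = 0 := fun j =>
    Subtype.ext (hR2sig (j + 3) (by omega))
  have aτ : ∀ j, 3 • τ j + 3 • τ (j + 1) + τ (j + 2) = 0 := fun j =>
    Subtype.ext (hR2tau (j + 3) (by omega))
  have a3s : 3 • s 0 + 3 • s 1 + s 2 = -τ 1 := Subtype.ext hR3s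
  have a3t : 3 • s 0 + 3 • t 1 + t 2 = σ 1 := Subtype.ext hR3t
  have a10 : 3 • s 0 + 3 • (s 1 + t 1) + s 2 + t 2 = 0 := Subtype.ext hR10
  have a13 : s 1 + σ 0 + σ 1 = γ • σ (m + 1) + δ • τ (e + 1) := Subtype.ext hR13
  have a14 : -t 1 + τ 0 + τ 1 = α • σ (m + 1) + β • τ (e + 1) := Subtype.ext hR14
  have a7σ : ∀ j, σ (j + 2) = 3 • s (j + 1) := fun j => Subtype.ext (hR7sig (j + 5) (by omega))
  have a7τ : ∀ j, τ (j + 2) = (-3 : ℤ) • t (j + 1) := fun j =>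
    Subtype.ext (hR7tau (j + 5) (by omega))
  have zσ : ∀ j, m + 5 - 3 ≤ j → σ j = 0 := fun j hj => Subtype.ext (hR5b (j + 3) (by omega))
  have zτ : ∀ j, e + 4 - 2 ≤ j → τ j = 0 := fun j hj => Subtype.ext (hR6b (j + 3) (by omega))
  have h3s : 3 • s 0 = σ 1 - τ 1 := by
    have h : 3 • s 0 = (3 • s 0 + 3 • s 1 + s 2) + (3 • s 0 + 3 • t 1 + t 2)
        - (3 • s 0 + 3 • (s 1 + t 1) + s 2 + t 2) := by abel
    rw [h, a3s, a3t, a10]; abel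
  -- the four elements generate `G'`
  have hK : AddSubgroup.closure ({s 0, σ 0, τ 0, τ 1} : Set (Additive (commutator G))) = ⊤ := by
    set K := AddSubgroup.closure ({s 0, σ 0, τ 0, τ 1} : Set (Additive (commutator G))) with hKdef
    have ks : s 0 ∈ K := AddSubgroup.subset_closure (by simp)
    have kσ0 : σ 0 ∈ K := AddSubgroup.subset_closure (by simp)
    have kτ0 : τ 0 ∈ K := AddSubgroup.subset_closure (by simp)
    have kτ1 : τ 1 ∈ K := AddSubgroup.subset_closure (by simp)
    have kσ1 : σ 1 ∈ K := by
      rw [eq_add_of_sub_eq h3s.symm]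
      exact K.add_mem (K.nsmul_mem ks 3) kτ1
    have kσ := chain_mem σ K aσ kσ0 kσ1
    have kτ := chain_mem τ K aτ kτ0 kτ1
    have ks1 : s 1 ∈ K := by
      have h : s 1 = γ • σ (m + 1) + δ • τ (e + 1) - σ 1 - σ 0 := by rw [← a13]; abel
      rw [h]
      exact K.sub_mem (K.sub_mem (K.add_mem (K.zsmul_mem (kσ _) _) (K.zsmul_mem (kτ _) _))
        (kσ _)) (kσ _)
    have kt1 : t 1 ∈ K := by
      have h : t 1 = τ 0 + τ 1 - (α • σ (m + 1) + β • τ (e + 1)) := by rw [← a14]; abel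
      rw [h]
      exact K.sub_mem (K.add_mem (kτ _) (kτ _))
        (K.add_mem (K.zsmul_mem (kσ _) _) (K.zsmul_mem (kτ _) _))
    let S : Set G := {sSeq x y 2, sigSeq x y 3, tauSeq x y 3, tauSeq x y 4}
    have down : ∀ c ∈ K, ((Additive.toMul c : commutator G) : G) ∈ Subgroup.closure S := by
      intro c hc
      induction hc using AddSubgroup.closure_induction with
      | mem c hc =>
        apply Subgroup.subset_closure
        rcases hc with rfl | rfl | rfl | rfl
        exacts [.inl rfl, .inr (.inl rfl), .inr (.inr (.inl rfl)), .inr (.inr (.inr rfl))]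
      | zero => exact one_mem _
      | add a b _ _ iha ihb => exact mul_mem iha ihb
      | neg a _ iha => exact inv_mem iha
    have hle : commutator G ≤ Subgroup.closure S := by
      refine commutator_le_closure x y S hgen (down _ ks) ?_ ?_
      · rintro g (rfl | rfl | rfl | rfl)
        · exact down _ ks1
        · exact down _ kσ1
        · rw [hR4tau 3 le_rfl]; exact one_mem _
        · rw [hR4tau 4 (by omega)]; exact one_mem _
      · rintro g (rfl | rfl | rfl | rfl)
        · exact down _ kt1
        · rw [hR4sig 3 le_rfl]; exact one_mem _
        · exact down _ kτ1
        · exact down _ (kτ 2)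
    have up : ∀ g ∈ Subgroup.closure S, ∃ h : g ∈ commutator G, Additive.ofMul ⟨g, h⟩ ∈ K := by
      intro g hg
      induction hg using Subgroup.closure_induction with
      | mem g hg =>
        rcases hg with rfl | rfl | rfl | rfl
        exacts [⟨_, ks⟩, ⟨_, kσ0⟩, ⟨_, kτ0⟩, ⟨_, kτ1⟩]
      | one => exact ⟨one_mem _, K.zero_mem⟩
      | mul a b _ _ iha ihb =>
        exact ⟨mul_mem iha.1 ihb.1, K.add_mem iha.2 ihb.2⟩
      | inv a _ iha => exact ⟨inv_mem iha.1, K.neg_mem iha.2⟩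
    rw [eq_top_iff]
    intro c _
    exact (up _ (hle (Additive.toMul c).2)).2
  have hcardC : Nat.card (commutator G) = 3 ^ (m + 5 + (e + 4) - 4) := by
    have h := Subgroup.card_eq_card_quotient_mul_card_subgroup (commutator G)
    rw [hcard, hab] at h
    have hn : n = 2 + (m + 5 + (e + 4) - 4) := by omega
    rw [hn, pow_add] at h
    omega
  obtain ⟨E⟩ := structure_of_chains (m + 5) (e + 4) hm5 he4 (by omega) (s 0) σ τ aσ zσ aτ zτ h3s hK
    hcardC
  -- the values of `Ψ` lie in `G'`, because monomials span the polynomial ring additively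
  let Ψ₀ : MvPolynomial (Fin 2) ℤ →+ Additive G :=
    AddMonoidHom.mk' (fun p => Additive.ofMul (Ψ p)) hΨadd
  have mΨ : ∀ p, Ψ p ∈ commutator G := by
    intro p
    induction p using MvPolynomial.induction_on' with
    | monomial u a =>
      have h : monomial u a =
          a • ((X 0 : MvPolynomial (Fin 2) ℤ) ^ (u 0) * X 1 ^ (u 1)) := by
        rw [MvPolynomial.monomial_eq, Finsupp.prod_fintype _ _ (by simp), Fin.prod_univ_two,
          MvPolynomial.C_mul']
      have h2 : Ψ (a • ((X 0 : MvPolynomial (Fin 2) ℤ) ^ (u 0) * X 1 ^ (u 1))) =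
          Ψ ((X 0 : MvPolynomial (Fin 2) ℤ) ^ (u 0) * X 1 ^ (u 1)) ^ a := map_zsmul Ψ₀ a _
      rw [h, h2, hΨmon]
      exact zpow_mem (iterate_pcomm_mem x _ (iterate_pcomm_mem y _ (pcomm_mem_commutator y x) _) _) _
    | add p q hp hq => rw [hΨadd]; exact mul_mem hp hq
  let F : MvPolynomial (Fin 2) ℤ →+ Additive (commutator G) :=
    AddMonoidHom.mk' (fun p => Additive.ofMul ⟨Ψ p, mΨ p⟩) fun p q => Subtype.ext (hΨadd p q)
  have hF : Function.Surjective F := by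
    have rs : ∀ j, s j ∈ F.range := fun j =>
      ⟨X 0 ^ j * X 1 ^ 0, Subtype.ext (hΨmon j 0)⟩
    have rt : ∀ j, t j ∈ F.range := fun j =>
      ⟨X 0 ^ 0 * X 1 ^ j, Subtype.ext (hΨmon 0 j)⟩
    have rσ2 : ∀ j, σ (j + 2) ∈ F.range := fun j => by
      rw [a7σ]; exact F.range.nsmul_mem (rs _) _
    have rτ2 : ∀ j, τ (j + 2) ∈ F.range := fun j => by
      rw [a7τ]; exact F.range.zsmul_mem (rt _) _
    have rτ1 : τ 1 ∈ F.range := by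
      rw [← neg_mem_iff, ← a3s]
      exact add_mem (add_mem (nsmul_mem (rs _) _) (nsmul_mem (rs _) _)) (rs _)
    have rσ1 : σ 1 ∈ F.range := by
      rw [eq_add_of_sub_eq h3s.symm]
      exact add_mem (nsmul_mem (rs _) _) rτ1
    have rσ : ∀ j, σ (j + 1) ∈ F.range
      | 0 => rσ1
      | j + 1 => rσ2 j
    have rτ : ∀ j, τ (j + 1) ∈ F.range
      | 0 => rτ1
      | j + 1 => rτ2 j
    have rσ0 : σ 0 ∈ F.range := by
      have h : σ 0 = γ • σ (m + 1) + δ • τ (e + 1) - σ 1 - s 1 := by rw [← a13]; abel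
      rw [h]
      exact sub_mem (sub_mem (add_mem (zsmul_mem (rσ _) _) (zsmul_mem (rτ _) _)) rσ1) (rs _)
    have rτ0 : τ 0 ∈ F.range := by
      have h : τ 0 = α • σ (m + 1) + β • τ (e + 1) - τ 1 + t 1 := by rw [← a14]; abel
      rw [h]
      exact add_mem (sub_mem (add_mem (zsmul_mem (rσ _) _) (zsmul_mem (rτ _) _)) rτ1) (rt _)
    rw [← AddMonoidHom.range_eq_top, eq_top_iff, ← hK, AddSubgroup.closure_le]
    rintro g (rfl | rfl | rfl | rfl)
    exacts [rs 0, rσ0, rτ0, rτ1]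
  have hker : (Ideal.Quotient.mk A).toAddMonoidHom.ker = F.ker := by
    ext p
    have h1 : p ∈ (Ideal.Quotient.mk A).toAddMonoidHom.ker ↔ Ψ p = 1 := by
      rw [← hA, ← Ideal.Quotient.eq_zero_iff_mem]; rfl
    have h2 : p ∈ F.ker ↔ Ψ p = 1 := by
      rw [AddMonoidHom.mem_ker]
      exact Subtype.ext_iff
    rw [h1, h2]
  obtain ⟨E'⟩ := equiv_of_ker_eq (Ideal.Quotient.mk A).toAddMonoidHom F
    Ideal.Quotient.mk_surjective hF hker
  have htor : Nat.card {g : G // g ∈ commutator G ∧ g ^ 3 = 1} = 81 := by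
    let e₁ : {g : G // g ∈ commutator G ∧ g ^ 3 = 1} ≃
        {c : Additive (commutator G) // 3 • c = 0} :=
      { toFun := fun g => ⟨Additive.ofMul ⟨g.1, g.2.1⟩, Subtype.ext g.2.2⟩
        invFun := fun c => ⟨(Additive.toMul c.1).1, (Additive.toMul c.1).2,
          congrArg (fun u : Additive (commutator G) => (Additive.toMul u).1) c.2⟩
        left_inv := fun _ => rfl
        right_inv := fun _ => rfl }
    let e₂ : {c : Additive (commutator G) // 3 • c = 0} ≃
        {p : NearlyHomocyclic 3 (m + 5 - 2) × NearlyHomocyclic 3 (e + 4 - 2) // 3 • p = 0} :=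
      E.toEquiv.subtypeEquiv fun c => by
        change 3 • c = 0 ↔ 3 • E c = 0
        rw [← map_nsmul, EmbeddingLike.map_eq_zero_iff]
    let e₃ : {p : NearlyHomocyclic 3 (m + 5 - 2) × NearlyHomocyclic 3 (e + 4 - 2) // 3 • p = 0} ≃
        {a : NearlyHomocyclic 3 (m + 5 - 2) // 3 • a = 0} ×
          {b : NearlyHomocyclic 3 (e + 4 - 2) // 3 • b = 0} :=
      { toFun := fun p => (⟨p.1.1, congrArg Prod.fst p.2⟩, ⟨p.1.2, congrArg Prod.snd p.2⟩)
        invFun := fun q => ⟨(q.1.1, q.2.1), Prod.ext q.1.2 q.2.2⟩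
        left_inv := fun _ => rfl
        right_inv := fun _ => rfl }
    rw [Nat.card_congr ((e₁.trans e₂).trans e₃), Nat.card_prod,
      card_three_torsion _ (by omega), card_three_torsion _ (by omega)]
  refine ⟨⟨E'.trans E⟩, ⟨E⟩, ?_, htor⟩
  by_contra! hall
  -- otherwise `|G'| = 81`, but `|G'| = 3^(m+e-4) ≥ 3^5`
  have h : Nat.card {g : G // g ∈ commutator G ∧ g ^ 3 = 1} = Nat.card (commutator G) :=
    Nat.card_congr (Equiv.subtypeEquivRight fun g => ⟨fun h => h.1, fun h => ⟨h, hall g h⟩⟩)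
  rw [htor, hcardC, show 81 = 3 ^ 4 by norm_num] at h
  have := Nat.pow_right_injective (le_refl 2 |>.trans (by norm_num : 2 ≤ 3)) h
  omega
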